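/- Let m : ℝ² → ℝ be a smooth function of (x,t) satisfying the KdV equation m_t + m_xxx − 6m·m_x = 0, let λ ∈ ℝ, and let ψ : ℝ² → ℝ be a smooth function satisfying ψ_xx = (m − λ)ψ at every point of ℝ². Then the function W := ψ_t − (2m + 4λ)ψ_x + m_x·ψ also satisfies W_xx = (m − λ)W at every point of ℝ². -/

import Mathlib

noncomputable section

/-- Partial derivative of `f` with respect to its first argument. -/
def d1 (f : ℝ → ℝ → ℝ) : ℝ → ℝ → ℝ := fun a b => deriv (fun a' => f a' b) a

/-- Partial derivative of `f` with respect to its second argument. -/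
def d2 (f : ℝ → ℝ → ℝ) : ℝ → ℝ → ℝ := fun a b => deriv (fun b' => f a b') b

/-- Smoothness of a two-variable real function. -/
def Smooth2 (f : ℝ → ℝ → ℝ) : Prop := ContDiff ℝ (⊤ : ℕ∞) (fun p : ℝ × ℝ => f p.1 p.2)

theorem Smooth2.hasFDerivAt {f : ℝ → ℝ → ℝ} (hf : Smooth2 f) (p : ℝ × ℝ) :
    HasFDerivAt (fun p : ℝ × ℝ => f p.1 p.2) (fderiv ℝ (fun p : ℝ × ℝ => f p.1 p.2) p) p :=
  (ContDiff.differentiable hf (by simp) p).hasFDerivAt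

theorem Smooth2.slice1 {f : ℝ → ℝ → ℝ} (hf : Smooth2 f) (x t : ℝ) :
    HasDerivAt (fun a => f a t) (fderiv ℝ (fun p : ℝ × ℝ => f p.1 p.2) (x, t) (1, 0)) x := by
  have h := (hf.hasFDerivAt (x, t)).comp_hasDerivAt x
    ((hasDerivAt_id x).prodMk (hasDerivAt_const x t))
  exact h

theorem Smooth2.slice2 {f : ℝ → ℝ → ℝ} (hf : Smooth2 f) (x t : ℝ) :
    HasDerivAt (fun b => f x b) (fderiv ℝ (fun p : ℝ × ℝ => f p.1 p.2) (x, t) (0, 1)) t := by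
  have h := (hf.hasFDerivAt (x, t)).comp_hasDerivAt t
    ((hasDerivAt_const t x).prodMk (hasDerivAt_id t))
  exact h

theorem Smooth2.d1_eq {f : ℝ → ℝ → ℝ} (hf : Smooth2 f) (x t : ℝ) :
    d1 f x t = fderiv ℝ (fun p : ℝ × ℝ => f p.1 p.2) (x, t) (1, 0) := (hf.slice1 x t).deriv

theorem Smooth2.d2_eq {f : ℝ → ℝ → ℝ} (hf : Smooth2 f) (x t : ℝ) :
    d2 f x t = fderiv ℝ (fun p : ℝ × ℝ => f p.1 p.2) (x, t) (0, 1) := (hf.slice2 x t).deriv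

theorem Smooth2.hasD1 {f : ℝ → ℝ → ℝ} (hf : Smooth2 f) (x t : ℝ) :
    HasDerivAt (fun a => f a t) (d1 f x t) x := by
  rw [hf.d1_eq]; exact hf.slice1 x t

theorem Smooth2.hasD2 {f : ℝ → ℝ → ℝ} (hf : Smooth2 f) (x t : ℝ) :
    HasDerivAt (fun b => f x b) (d2 f x t) t := by
  rw [hf.d2_eq]; exact hf.slice2 x t

theorem Smooth2.fderiv_smooth {f : ℝ → ℝ → ℝ} (hf : Smooth2 f) :
    ContDiff ℝ (⊤ : ℕ∞) (fderiv ℝ (fun p : ℝ × ℝ => f p.1 p.2)) :=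
  ContDiff.fderiv_right hf (by simp)

theorem Smooth2.d1 {f : ℝ → ℝ → ℝ} (hf : Smooth2 f) : Smooth2 (d1 f) := by
  have h : ContDiff ℝ (⊤ : ℕ∞)
      (fun p : ℝ × ℝ => fderiv ℝ (fun p : ℝ × ℝ => f p.1 p.2) p (1, 0)) :=
    hf.fderiv_smooth.clm_apply contDiff_const
  unfold Smooth2
  convert h using 2 with p
  exact hf.d1_eq p.1 p.2

theorem Smooth2.d2 {f : ℝ → ℝ → ℝ} (hf : Smooth2 f) : Smooth2 (d2 f) := by
  have h : ContDiff ℝ (⊤ : ℕ∞)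
      (fun p : ℝ × ℝ => fderiv ℝ (fun p : ℝ × ℝ => f p.1 p.2) p (0, 1)) :=
    hf.fderiv_smooth.clm_apply contDiff_const
  unfold Smooth2
  convert h using 2 with p
  exact hf.d2_eq p.1 p.2

theorem snd_symm_aux (F : ℝ × ℝ → ℝ) (p : ℝ × ℝ)
    {F' : ℝ × ℝ → ℝ × ℝ →L[ℝ] ℝ} {F'' : ℝ × ℝ →L[ℝ] ℝ × ℝ →L[ℝ] ℝ}
    (h : ∀ y, HasFDerivAt F (F' y) y) (h2 : HasFDerivAt F' F'' p) :
    F'' ((1 : ℝ), (0 : ℝ)) ((0 : ℝ), (1 : ℝ)) = F'' ((0 : ℝ), (1 : ℝ)) ((1 : ℝ), (0 : ℝ)) :=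
  second_derivative_symmetric (𝕜 := ℝ) h h2 _ _

theorem slice_aux1 (G : ℝ × ℝ → ℝ × ℝ →L[ℝ] ℝ) (G' : ℝ × ℝ →L[ℝ] ℝ × ℝ →L[ℝ] ℝ) (x t : ℝ)
    (v : ℝ × ℝ) (h : HasFDerivAt G G' (x, t)) :
    HasDerivAt (fun a => G (a, t) v) (G' ((1 : ℝ), (0 : ℝ)) v) x := by
  have hc : HasDerivAt (fun a : ℝ => ((a, t) : ℝ × ℝ)) ((1 : ℝ), (0 : ℝ)) x :=
    (hasDerivAt_id x).prodMk (hasDerivAt_const x t)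
  have h1 : HasDerivAt (fun a => G (a, t)) (G' ((1 : ℝ), (0 : ℝ))) x :=
    HasFDerivAt.comp_hasDerivAt (f := fun a : ℝ => ((a, t) : ℝ × ℝ)) x h hc
  exact (ContinuousLinearMap.apply ℝ ℝ v).hasFDerivAt.comp_hasDerivAt x h1

theorem slice_aux2 (G : ℝ × ℝ → ℝ × ℝ →L[ℝ] ℝ) (G' : ℝ × ℝ →L[ℝ] ℝ × ℝ →L[ℝ] ℝ) (x t : ℝ)
    (v : ℝ × ℝ) (h : HasFDerivAt G G' (x, t)) :
    HasDerivAt (fun b => G (x, b) v) (G' ((0 : ℝ), (1 : ℝ)) v) t := by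
  have hc : HasDerivAt (fun b : ℝ => ((x, b) : ℝ × ℝ)) ((0 : ℝ), (1 : ℝ)) t :=
    (hasDerivAt_const t x).prodMk (hasDerivAt_id t)
  have h1 : HasDerivAt (fun b => G (x, b)) (G' ((0 : ℝ), (1 : ℝ))) t :=
    HasFDerivAt.comp_hasDerivAt (f := fun b : ℝ => ((x, b) : ℝ × ℝ)) t h hc
  exact (ContinuousLinearMap.apply ℝ ℝ v).hasFDerivAt.comp_hasDerivAt t h1

theorem Smooth2.comm {f : ℝ → ℝ → ℝ} (hf : Smooth2 f) : _root_.d1 (_root_.d2 f) = _root_.d2 (_root_.d1 f) := by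
  funext x t
  have hd : HasFDerivAt (fderiv ℝ (fun p : ℝ × ℝ => f p.1 p.2))
      (fderiv ℝ (fderiv ℝ (fun p : ℝ × ℝ => f p.1 p.2)) (x, t)) (x, t) :=
    (hf.fderiv_smooth.differentiable (by simp) (x, t)).hasFDerivAt
  have hsym := snd_symm_aux _ _ hf.hasFDerivAt hd
  have h1 : _root_.d1 (_root_.d2 f) x t
      = fderiv ℝ (fderiv ℝ (fun p : ℝ × ℝ => f p.1 p.2)) (x, t) (1, 0) (0, 1) := by
    have h := slice_aux1 _ _ x t (0, 1) hd
    have e : (fun a => _root_.d2 f a t)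
      = fun a => fderiv ℝ (fun p : ℝ × ℝ => f p.1 p.2) (a, t) (0, 1) := by
      funext a; exact hf.d2_eq a t
    change deriv (fun a => _root_.d2 f a t) x = _
    rw [e]
    exact h.deriv
  have h2 : _root_.d2 (_root_.d1 f) x t
      = fderiv ℝ (fderiv ℝ (fun p : ℝ × ℝ => f p.1 p.2)) (x, t) (0, 1) (1, 0) := by
    have h := slice_aux2 _ _ x t (1, 0) hd
    have e : (fun b => _root_.d1 f x b)
      = fun b => fderiv ℝ (fun p : ℝ × ℝ => f p.1 p.2) (x, b) (1, 0) := by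
      funext b; exact hf.d1_eq x b
    change deriv (fun b => _root_.d1 f x b) t = _
    rw [e]
    exact h.deriv
  rw [h1, h2, hsym]

/-- if `m` solves KdV and `ψ_xx = (m − λ)ψ`, then
`W = ψ_t − (2m + 4λ)ψ_x + m_x·ψ` satisfies the same spectral equation. -/
theorem KdV_Lax_compatibility (m ψ : ℝ → ℝ → ℝ) (lam : ℝ)
    (hm : Smooth2 m) (hψ : Smooth2 ψ)
    (hKdV : ∀ x t, d2 m x t + d1 (d1 (d1 m)) x t - 6 * m x t * d1 m x t = 0)
    (hspec : ∀ x t, d1 (d1 ψ) x t = (m x t - lam) * ψ x t) :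
    ∀ x t,
      d1 (d1 (fun x t =>
          d2 ψ x t - (2 * m x t + 4 * lam) * d1 ψ x t + d1 m x t * ψ x t)) x t
        = (m x t - lam) *
          (d2 ψ x t - (2 * m x t + 4 * lam) * d1 ψ x t + d1 m x t * ψ x t) := by
  intro x t
  have hψ1 := hψ.d1
  have hm1 := hm.d1
  have hm2 := hm1.d1
  have hψt := hψ.d2
  have hψtx := hψt.d1
  have hs : d1 (d1 ψ) = fun x t => (m x t - lam) * ψ x t := by
    funext x t; exact hspec x t
  -- third mixed derivative
  have h3 : d1 (d1 (d2 ψ)) x t = d2 m x t * ψ x t + (m x t - lam) * d2 ψ x t := by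
    rw [hψ.comm, hψ1.comm, hs]
    exact (((hm.hasD2 x t).sub_const lam).mul (hψ.hasD2 x t)).deriv
  -- first derivative of W
  have hW : d1 (fun x t =>
          d2 ψ x t - (2 * m x t + 4 * lam) * d1 ψ x t + d1 m x t * ψ x t)
      = fun x t => d1 (d2 ψ) x t - (2 * d1 m x t) * d1 ψ x t
          - (2 * m x t + 4 * lam) * ((m x t - lam) * ψ x t)
          + d1 (d1 m) x t * ψ x t + d1 m x t * d1 ψ x t := by
    funext x t
    have h := ((hψt.hasD1 x t).sub ((((hm.hasD1 x t).const_mul 2).add_const (4 * lam)).mul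
      (hψ1.hasD1 x t))).add ((hm1.hasD1 x t).mul (hψ.hasD1 x t))
    refine h.deriv.trans ?_
    rw [hspec]; ring
  rw [hW]
  have h := (((((hψtx.hasD1 x t).sub (((hm1.hasD1 x t).const_mul 2).mul (hψ1.hasD1 x t))).sub
    ((((hm.hasD1 x t).const_mul 2).add_const (4 * lam)).mul
      (((hm.hasD1 x t).sub_const lam).mul (hψ.hasD1 x t)))).add
    ((hm2.hasD1 x t).mul (hψ.hasD1 x t))).add ((hm1.hasD1 x t).mul (hψ1.hasD1 x t)))
  refine h.deriv.trans ?_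
  simp only [Pi.mul_apply]
  rw [h3, hspec]
  linear_combination (ψ x t) * hKdV x t
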